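/- Let X be a nonempty set, E a real topological vector space with a solid cone C, and d : X × X → E a cone rectangular metric, i.e.: d(x,y) ∈ C; d(x,y) = 0 iff x = y; d(x,y) = d(y,x); and d(x,y) ⪯ d(x,w) + d(w,z) + d(z,y) for all x, y ∈ X and all distinct points w, z ∈ X ∖ {x,y}. Then for any interior point e of C, the function D(x,y) = ‖d(x,y)‖_e is a rectangular metric on X; moreover, a sequence is Cauchy (respectively convergent) in (X,d) if and only if it is Cauchy (respectively convergent) in (X,D). -/

import Mathlib

open Filter Topology

/-- The Minkowski functional (gauge) of the order interval `[-e, e]`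
determined by the cone `C`. -/
noncomputable def coneNorm {E : Type*} [AddCommGroup E] [Module ℝ E]
    (C : Set E) (e x : E) : ℝ :=
  gauge {z : E | z + e ∈ C ∧ e - z ∈ C} x

/-- Convergence of a sequence in a cone (rectangular) metric space. -/
def ConeConv {X E : Type*} [AddCommGroup E] [TopologicalSpace E]
    (C : Set E) (d : X → X → E) (x : ℕ → X) (l : X) : Prop :=
  ∀ c ∈ interior C, ∃ n₀ : ℕ, ∀ n ≥ n₀, c - d (x n) l ∈ interior C

/-- Cauchyness of a sequence in a cone (rectangular) metric space. -/
def ConeCauchy {X E : Type*} [AddCommGroup E] [TopologicalSpace E]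
    (C : Set E) (d : X → X → E) (x : ℕ → X) : Prop :=
  ∀ c ∈ interior C, ∃ n₀ : ℕ, ∀ m ≥ n₀, ∀ n ≥ n₀, c - d (x m) (x n) ∈ interior C

/-!
For `e ∈ int C` the order interval `[-e, e]` is a convex neighbourhood of `0` whose interior is cut
out by the interior of `C`. The theory of gauges then shows that `‖·‖_e` is subadditive and that,
for `0 < r`, `‖x‖_e < r` iff `r • e + x` and `r • e - x` lie in `int C`; when `0 ⪯ x` this says just
`x ≪ r • e`. Adding an element of `C` preserves `int C`, so `‖·‖_e` is monotone on `C`, which turns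
the vector-valued rectangle inequality into the scalar one. If `‖x‖_e = 0`, letting `r → 0` puts
`x` and `-x` in the closed cone `C`, so `x = 0`. Both kinds of convergence agree because every
`c ∈ int C` dominates a positive multiple of `e`.
-/

section Interior

open Set
open scoped Pointwise

variable {E : Type*} [AddCommGroup E] [TopologicalSpace E]

theorem add_mem_interior_of_mem_cone {𝕜 : Type*} [Semiring 𝕜] [PartialOrder 𝕜] [SMul 𝕜 E]
    [ContinuousAdd E] {C : ConvexCone 𝕜 E} {a b : E} (ha : a ∈ interior (C : Set E)) (hb : b ∈ C) :
    a + b ∈ interior (C : Set E) := by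
  have add_subset : (C : Set E) + C ⊆ C := add_subset_iff.2 fun _ hx _ hy => C.add_mem hx hy
  exact interior_mono add_subset (subset_interior_add_left (add_mem_add ha hb))

theorem smul_mem_interior_cone_iff {𝕜 : Type*} [Field 𝕜] [LinearOrder 𝕜] [IsStrictOrderedRing 𝕜]
    [Module 𝕜 E] [ContinuousConstSMul 𝕜 E] {C : ConvexCone 𝕜 E} {r : 𝕜} (hr : 0 < r) {x : E} :
    r • x ∈ interior (C : Set E) ↔ x ∈ interior (C : Set E) := by
  have smul_cone : r • (C : Set E) = C := by
    ext y
    rw [mem_smul_set_iff_inv_smul_mem₀ hr.ne']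
    exact C.smul_mem_iff (inv_pos.2 hr)
  rw [← smul_mem_smul_set_iff₀ hr.ne' (interior (C : Set E)) x, ← interior_smul₀ hr.ne', smul_cone]

variable [Module ℝ E] [IsTopologicalAddGroup E] [ContinuousSMul ℝ E]

theorem exists_pos_sub_smul_mem_interior {s : Set E} {c : E} (hc : c ∈ interior s) (x : E) :
    ∃ t : ℝ, 0 < t ∧ c - t • x ∈ interior s := by
  have tendsto_sub : Tendsto (fun t : ℝ => c - t • x) (𝓝[>] 0) (𝓝 c) :=
    ((by fun_prop : Continuous fun t : ℝ => c - t • x).tendsto' 0 c (by simp)).mono_left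
      nhdsWithin_le_nhds
  have sub_mem := tendsto_sub.eventually_mem (isOpen_interior.mem_nhds hc)
  exact (eventually_mem_nhdsWithin.and sub_mem).exists

theorem mem_of_forall_pos_smul_add_mem {s : Set E} (hs : IsClosed s) {e x : E}
    (h : ∀ r : ℝ, 0 < r → r • e + x ∈ s) : x ∈ s := by
  have tendsto_add : Tendsto (fun r : ℝ => r • e + x) (𝓝[>] 0) (𝓝 x) :=
    ((by fun_prop : Continuous fun r : ℝ => r • e + x).tendsto' 0 x (by simp)).mono_left
      nhdsWithin_le_nhds
  exact hs.mem_of_tendsto tendsto_add (eventually_mem_nhdsWithin.mono h)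

end Interior

section ConeInterval

variable {E : Type*} [AddCommGroup E]

/-- The order interval `[-e, e]` for the order `x ⪯ y ↔ y - x ∈ C`, in the form in which it occurs
in `coneNorm`. -/
def coneInterval (C : Set E) (e : E) : Set E :=
  {z | z + e ∈ C ∧ e - z ∈ C}

theorem convex_coneInterval [Module ℝ E] {C : Set E} (hC : Convex ℝ C) (e : E) :
    Convex ℝ (coneInterval C e) :=
  (hC.translate_preimage_left e).inter
    (hC.affine_preimage (AffineMap.const ℝ E e - AffineMap.id ℝ E))

variable [TopologicalSpace E] [IsTopologicalAddGroup E]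

theorem interior_coneInterval (C : Set E) (e : E) :
    interior (coneInterval C e) = coneInterval (interior C) e := by
  change interior ((Homeomorph.addRight e) ⁻¹' C ∩ (Homeomorph.subLeft e) ⁻¹' C) = _
  rw [interior_inter, ← Homeomorph.preimage_interior, ← Homeomorph.preimage_interior]
  rfl

theorem coneInterval_mem_nhds_zero {C : Set E} {e : E} (he : e ∈ interior C) :
    coneInterval C e ∈ 𝓝 0 := by
  rw [← mem_interior_iff_mem_nhds, interior_coneInterval]
  simpa [coneInterval] using he

end ConeInterval

section ConeNorm

variable {E : Type*} [AddCommGroup E] [Module ℝ E]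

theorem coneNorm_nonneg (C : Set E) (e x : E) : 0 ≤ coneNorm C e x :=
  gauge_nonneg x

theorem coneNorm_zero (C : Set E) (e : E) : coneNorm C e 0 = 0 :=
  gauge_zero

variable [TopologicalSpace E] [IsTopologicalAddGroup E] [ContinuousSMul ℝ E]

theorem coneNorm_add_le {C : Set E} (hC : Convex ℝ C) {e : E} (he : e ∈ interior C) (x y : E) :
    coneNorm C e (x + y) ≤ coneNorm C e x + coneNorm C e y :=
  gauge_add_le (convex_coneInterval hC e) (absorbent_nhds_zero (coneInterval_mem_nhds_zero he)) x y

variable {C : ConvexCone ℝ E} {e : E}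

theorem coneNorm_lt_iff (he : e ∈ interior (C : Set E)) {r : ℝ} (hr : 0 < r) {x : E} :
    coneNorm C e x < r ↔ r • e + x ∈ interior (C : Set E) ∧ r • e - x ∈ interior (C : Set E) := by
  have add_eq : r • e + x = r • (r⁻¹ • x + e) := by
    rw [smul_add, smul_inv_smul₀ hr.ne', add_comm]
  have sub_eq : r • e - x = r • (e - r⁻¹ • x) := by
    rw [smul_sub, smul_inv_smul₀ hr.ne']
  calc coneNorm C e x < r
    _ ↔ gauge (coneInterval C e) (r⁻¹ • x) < 1 := by
      rw [gauge_smul_of_nonneg (inv_nonneg.2 hr.le), smul_eq_mul, inv_mul_lt_one₀ hr]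
      rfl
    _ ↔ r⁻¹ • x ∈ coneInterval (interior (C : Set E)) e := by
      rw [gauge_lt_one_iff_mem_interior (convex_coneInterval C.convex e)
        (coneInterval_mem_nhds_zero he), interior_coneInterval]
    _ ↔ _ := by
      rw [add_eq, sub_eq, smul_mem_interior_cone_iff hr, smul_mem_interior_cone_iff hr]
      rfl

theorem coneNorm_lt_iff_of_mem (he : e ∈ interior (C : Set E)) {r : ℝ} (hr : 0 < r) {x : E}
    (hx : x ∈ C) : coneNorm C e x < r ↔ r • e - x ∈ interior (C : Set E) := by
  rw [coneNorm_lt_iff he hr, and_iff_right]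
  exact add_mem_interior_of_mem_cone ((smul_mem_interior_cone_iff hr).2 he) hx

theorem coneNorm_eq_zero_iff (hC : IsClosed (C : Set E)) (hsal : C.Salient)
    (he : e ∈ interior (C : Set E)) {x : E} : coneNorm C e x = 0 ↔ x = 0 := by
  refine ⟨fun hx => ?_, fun hx => hx ▸ coneNorm_zero _ e⟩
  have mem_interiors (r : ℝ) (hr : 0 < r) := (coneNorm_lt_iff he hr).1 (hx.trans_lt hr)
  have mem : x ∈ C :=
    mem_of_forall_pos_smul_add_mem hC fun r hr => interior_subset (mem_interiors r hr).1
  have neg_mem : -x ∈ C :=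
    mem_of_forall_pos_smul_add_mem hC fun r hr => by
      simpa only [sub_eq_add_neg] using interior_subset (mem_interiors r hr).2
  exact by_contra fun hne => hsal x mem hne neg_mem

theorem coneNorm_le_coneNorm (he : e ∈ interior (C : Set E)) {x y : E} (hx : x ∈ C)
    (hxy : y - x ∈ C) : coneNorm C e x ≤ coneNorm C e y := by
  refine le_of_forall_gt fun r hr => ?_
  have r_pos : 0 < r := (coneNorm_nonneg _ e y).trans_lt hr
  have sub_mem := ((coneNorm_lt_iff he r_pos).1 hr).2
  rw [coneNorm_lt_iff_of_mem he r_pos hx, ← sub_add_sub_cancel _ y]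
  exact add_mem_interior_of_mem_cone sub_mem hxy

theorem coneNorm_le_add_add (he : e ∈ interior (C : Set E)) {x u v w : E} (hx : x ∈ C)
    (h : u + v + w - x ∈ C) :
    coneNorm C e x ≤ coneNorm C e u + coneNorm C e v + coneNorm C e w :=
  calc coneNorm C e x
    _ ≤ coneNorm C e (u + v + w) := coneNorm_le_coneNorm he hx h
    _ ≤ coneNorm C e (u + v) + coneNorm C e w := coneNorm_add_le C.convex he _ _
    _ ≤ coneNorm C e u + coneNorm C e v + coneNorm C e w := by
      gcongr
      exact coneNorm_add_le C.convex he u v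

end ConeNorm

section Convergence

variable {E : Type*} [AddCommGroup E] [Module ℝ E] [TopologicalSpace E] [IsTopologicalAddGroup E]
  [ContinuousSMul ℝ E] {C : ConvexCone ℝ E} {e : E}

theorem forall_eventually_sub_mem_interior_iff {ι : Type*} {l : Filter ι} {f : ι → E}
    (he : e ∈ interior (C : Set E)) (hf : ∀ i, f i ∈ C) :
    (∀ c ∈ interior (C : Set E), ∀ᶠ i in l, c - f i ∈ interior (C : Set E)) ↔
      ∀ ε : ℝ, 0 < ε → ∀ᶠ i in l, coneNorm C e (f i) < ε := by
  constructor
  · intro h ε hε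
    filter_upwards [h (ε • e) ((smul_mem_interior_cone_iff hε).2 he)] with i hi
    exact (coneNorm_lt_iff_of_mem he hε (hf i)).2 hi
  · intro h c hc
    obtain ⟨ε, hε, sub_mem⟩ := exists_pos_sub_smul_mem_interior hc e
    filter_upwards [h ε hε] with i hi
    have smul_sub_mem := (coneNorm_lt_iff_of_mem he hε (hf i)).1 hi
    rw [← sub_add_sub_cancel c (ε • e)]
    exact add_mem_interior_of_mem_cone sub_mem (interior_subset smul_sub_mem)

variable {X : Type*} {d : X → X → E}

theorem coneConv_iff_tendsto_coneNorm (he : e ∈ interior (C : Set E)) (hd : ∀ x y, d x y ∈ C)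
    {x : ℕ → X} {a : X} :
    ConeConv C d x a ↔ Tendsto (fun n => coneNorm C e (d (x n) a)) atTop (𝓝 0) := by
  have tendsto_iff : Tendsto (fun n => coneNorm C e (d (x n) a)) atTop (𝓝 0) ↔
      ∀ ε : ℝ, 0 < ε → ∀ᶠ n in atTop, coneNorm C e (d (x n) a) < ε := by
    simp only [Metric.tendsto_nhds, dist_zero_right, Real.norm_of_nonneg (coneNorm_nonneg _ _ _),
      gt_iff_lt]
  rw [tendsto_iff, ← forall_eventually_sub_mem_interior_iff he fun n => hd (x n) a]
  simp only [ConeConv, eventually_atTop]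

theorem coneCauchy_iff_coneNorm_lt (he : e ∈ interior (C : Set E)) (hd : ∀ x y, d x y ∈ C)
    {x : ℕ → X} :
    ConeCauchy C d x ↔
      ∀ ε : ℝ, 0 < ε → ∃ n₀ : ℕ, ∀ m ≥ n₀, ∀ n ≥ n₀, coneNorm C e (d (x m) (x n)) < ε := by
  simpa only [ConeCauchy, eventually_atTop_prod_self'] using
    forall_eventually_sub_mem_interior_iff (l := atTop) (f := fun p : ℕ × ℕ => d (x p.1) (x p.2)) he
      fun p => hd (x p.1) (x p.2)

end Convergence

theorem stmt_18 {X : Type*} [Nonempty X]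
    {E : Type*} [AddCommGroup E] [Module ℝ E] [TopologicalSpace E]
    [IsTopologicalAddGroup E] [ContinuousSMul ℝ E]
    (C : Set E) (hC_closed : IsClosed C) (hC_ne : C ≠ {0})
    (hC_add : ∀ x ∈ C, ∀ y ∈ C, x + y ∈ C)
    (hC_smul : ∀ r : ℝ, 0 ≤ r → ∀ x ∈ C, r • x ∈ C)
    (hC_pointed : C ∩ (-C) = {0})
    (hSolid : (interior C).Nonempty)
    (d : X → X → E)
    (hd_pos : ∀ x y : X, d x y ∈ C)
    (hd_eq : ∀ x y : X, d x y = 0 ↔ x = y)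
    (hd_symm : ∀ x y : X, d x y = d y x)
    (hd_rect : ∀ x y w z : X, w ≠ z → w ≠ x → w ≠ y → z ≠ x → z ≠ y →
      d x w + d w z + d z y - d x y ∈ C)
    (e : E) (he : e ∈ interior C) :
    -- `D = ‖d ·‖_e` is a rectangular metric on `X`
    ((∀ x y : X, 0 ≤ coneNorm C e (d x y)) ∧
     (∀ x y : X, coneNorm C e (d x y) = 0 ↔ x = y) ∧
     (∀ x y : X, coneNorm C e (d x y) = coneNorm C e (d y x)) ∧
     (∀ x y w z : X, w ≠ z → w ≠ x → w ≠ y → z ≠ x → z ≠ y →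
        coneNorm C e (d x y) ≤
          coneNorm C e (d x w) + coneNorm C e (d w z) + coneNorm C e (d z y))) ∧
    -- a sequence converges in `(X, d)` iff it converges in `(X, D)`
    (∀ (x : ℕ → X) (l : X), ConeConv C d x l ↔
      Tendsto (fun n => coneNorm C e (d (x n) l)) atTop (𝓝 0)) ∧
    -- a sequence is Cauchy in `(X, d)` iff it is Cauchy in `(X, D)`
    (∀ x : ℕ → X, ConeCauchy C d x ↔
      ∀ ε : ℝ, 0 < ε → ∃ n₀ : ℕ, ∀ m ≥ n₀, ∀ n ≥ n₀,
        coneNorm C e (d (x m) (x n)) < ε) := by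
  let K : ConvexCone ℝ E :=
    { carrier := C
      smul_mem' := fun r hr x hx => hC_smul r hr.le x hx
      add_mem' := fun x hx y hy => hC_add x hx y hy }
  have K_salient : K.Salient := fun x hx x_ne hx_neg => x_ne (hC_pointed.subset ⟨hx, hx_neg⟩)
  have heK : e ∈ interior (K : Set E) := he
  refine ⟨⟨fun x y => coneNorm_nonneg C e _, fun x y => ?_, fun x y => by rw [hd_symm], ?_⟩,
    fun x l => coneConv_iff_tendsto_coneNorm heK hd_pos,
    fun x => coneCauchy_iff_coneNorm_lt heK hd_pos⟩
  · exact (coneNorm_eq_zero_iff hC_closed K_salient heK).trans (hd_eq x y)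
  · intro x y w z hwz hwx hwy hzx hzy
    exact coneNorm_le_add_add heK (hd_pos x y) (hd_rect x y w z hwz hwx hwy hzx hzy)
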